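/- There is an absolute constant C > 0 such that the following holds. Let G be an abelian group, let A ⊆ G be a finite set with |A| ≥ 2, and let K ≥ 1 be a real number with |A + A| ≤ K|A|. Then there is a finite set L ⊆ G such that A ⊆ Span(L) and |L| ≤ C·K·log|A|. -/

import Mathlib

open Pointwise

/-- The span of a finite set `L`: all sums `∑_{x ∈ L} σ_x • x` with `σ_x ∈ {-1,0,1}`. -/
def Span {G : Type*} [AddCommGroup G] (L : Finset G) : Set G :=
  {y | ∃ σ : G → ℤ, (∀ x, σ x = -1 ∨ σ x = 0 ∨ σ x = 1) ∧ y = ∑ x ∈ L, σ x • x}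

/-!
A maximal dissociated subset `L` of `A` has `A ⊆ Span L`, so it suffices to bound dissociated
subsets of `A`. In the group algebra `ℝ[G]`, with `e_g` the basis element at `g` and `⋆` the
involution `e_g ↦ e_{-g}`, the Riesz product `∏_{g ∈ L} (1 + α e_g)(1 + α e_{-g})` of a dissociated
set is the Hermitian square of an element with distinct exponents, so its constant coefficient is
`(1 + α²)^{|L|}`. Take `u = ∑_{x ∈ X} f(x) e_x` and compare two estimates for the constant
coefficient of `u u⋆` times the Riesz product. By Cauchy–Schwarz, `u u⋆` is at most `|X| ∑ f²`,
which gives an upper bound; the convexity of the exponential gives a lower bound that is exponential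
in `α ∑_{g ∈ L} ∑_x f(x) f(g + x) / ∑ f²`. Hence this autocorrelation sum is `O(log |X|)`, up to an
error of order `α² |L|`. Every `g ∈ L` translates `A` into `A + A`, so taking `X = A ∪ (A + A)`,
with `f = √K` on `A`, `f = 1` elsewhere, and `α` of order `1 / √K`, yields `|L| = O(K log |A|)`.
-/

section Span

variable {G : Type*} [AddCommGroup G]

lemma sum_sub_sum_mem_span {L t u : Finset G} (ht : t ⊆ L) (hu : u ⊆ L) :
    ∑ x ∈ t, x - ∑ x ∈ u, x ∈ Span L := by
  classical
  refine ⟨fun x ↦ (if x ∈ t then 1 else 0) - if x ∈ u then 1 else 0, fun x ↦ ?_, ?_⟩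
  · dsimp only
    split_ifs <;> simp
  · simp [sub_smul, Finset.sum_sub_distrib, ite_smul, Finset.inter_eq_right.2 ht,
      Finset.inter_eq_right.2 hu]

lemma mem_span_of_not_addDissociated_insert [DecidableEq G] {L : Finset G} {a : G}
    (hL : AddDissociated (L : Set G)) (ha : ¬ AddDissociated (↑(insert a L) : Set G)) :
    a ∈ Span L := by
  obtain ⟨t, u, ht, hu, htu, hne, hsum⟩ := not_addDissociated_iff_exists_disjoint.1 ha
  rw [Finset.coe_subset] at ht hu
  have mem_span_of_mem {t u : Finset G} (ht : t ⊆ insert a L) (hu : u ⊆ insert a L)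
      (htu : Disjoint t u) (hsum : ∑ x ∈ t, x = ∑ x ∈ u, x) (hat : a ∈ t) : a ∈ Span L := by
    have hau : a ∉ u := Finset.disjoint_left.1 htu hat
    have ha_eq : a = ∑ x ∈ u, x - ∑ x ∈ t.erase a, x := by
      rw [← hsum, ← Finset.add_sum_erase t (fun x ↦ x) hat, add_sub_cancel_right]
    rw [ha_eq]
    exact sum_sub_sum_mem_span ((Finset.subset_insert_iff_of_notMem hau).1 hu)
      (Finset.subset_insert_iff.1 ht)
  by_cases hat : a ∈ t
  · exact mem_span_of_mem ht hu htu hsum hat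
  by_cases hau : a ∈ u
  · exact mem_span_of_mem hu ht htu.symm hsum.symm hau
  rw [Finset.subset_insert_iff_of_notMem hat] at ht
  rw [Finset.subset_insert_iff_of_notMem hau] at hu
  exact absurd (hL (Finset.coe_subset.2 ht) (Finset.coe_subset.2 hu) hsum) hne

lemma exists_addDissociated_subset_span (A : Finset G) :
    ∃ L ⊆ A, AddDissociated (L : Set G) ∧ (A : Set G) ⊆ Span L := by
  classical
  have hne : (A.powerset.filter fun L : Finset G ↦ AddDissociated (L : Set G)).Nonempty :=
    ⟨∅, by simp⟩
  obtain ⟨L, hL⟩ := Finset.exists_maximal hne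
  have ⟨hLA, hLdiss⟩ : L ⊆ A ∧ AddDissociated (L : Set G) := by simpa using hL.prop
  refine ⟨L, hLA, hLdiss, fun a ha ↦ ?_⟩
  by_cases haL : a ∈ L
  · simpa using sum_sub_sum_mem_span (Finset.singleton_subset_iff.2 haL) (Finset.empty_subset L)
  · refine mem_span_of_not_addDissociated_insert hLdiss fun h ↦ ?_
    refine hL.not_gt ?_ (Finset.ssubset_insert haL)
    exact Finset.mem_filter.2 ⟨Finset.mem_powerset.2 (Finset.insert_subset ha hLA), h⟩

end Span

section PositiveFunctional

variable {R ι : Type*} [CommRing R] [Algebra ℝ R] {S : Subsemiring R} {L : Finset ι}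
  {c : ι → R} {α : ℝ}

lemma sub_two_mul_sq_le_log_one_add {x : ℝ} (hx : -(1 / 2) ≤ x) :
    x - 2 * x ^ 2 ≤ Real.log (1 + x) := by
  have hpos : 0 < 1 + x := by linarith
  refine le_trans ?_ (Real.one_sub_inv_le_log_of_pos hpos)
  have hdiff : 1 - (1 + x)⁻¹ - (x - 2 * x ^ 2) = x ^ 2 * (1 + 2 * x) / (1 + x) := by
    field_simp
    ring
  have hfactor : 0 ≤ 1 + 2 * x := by linarith
  rw [← sub_nonneg, hdiff]
  positivity

/-- `(1 + α ^ 2) + 2 * α * c` is the average of `(1 ± α) ^ 2` with the weights `(1 ± c) / 2`, so its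
logarithm is at least `2 * α * c - 4 * α ^ 2`; hence the shift of the tangent line. -/
lemma mul_sub_exp_smul_mem (hS : ∀ r : ℝ, 0 ≤ r → ∀ p ∈ S, r • p ∈ S) {c P s : R} {m : ℝ}
    (hc_add : 1 + c ∈ S) (hc_sub : 1 - c ∈ S) (hα : |α| ≤ 1 / 2)
    (hP : ∀ a : ℝ, P - Real.exp a • ((1 - a - m) • 1 + (2 * α) • s) ∈ S) (a : ℝ) :
    ((1 + α ^ 2) • 1 + (2 * α) • c) * P - Real.exp a •
      ((1 - a - (m + 4 * α ^ 2)) • 1 + (2 * α) • (c + s)) ∈ S := by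
  obtain ⟨hα₁, hα₂⟩ := abs_le.1 hα
  let T (b : ℝ) : R := (1 - b - m) • 1 + (2 * α) • s
  have hscaled {β : ℝ} (hβ : 0 < 1 + β) :
      (1 + β) ^ 2 • P - Real.exp a • T (a - 2 * Real.log (1 + β)) ∈ S := by
    have hexp : (1 + β) ^ 2 * Real.exp (a - 2 * Real.log (1 + β)) = Real.exp a := by
      rw [mul_comm 2, Real.exp_sub, Real.exp_mul, Real.exp_log hβ, Real.rpow_two]
      field_simp
    rw [← hexp, mul_smul, ← smul_sub]
    exact hS _ (sq_nonneg (1 + β)) _ (hP _)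
  have hlog_add : 0 ≤ Real.log (1 + α) - (α - 2 * α ^ 2) :=
    sub_nonneg.2 (sub_two_mul_sq_le_log_one_add (by linarith))
  have hlog_sub : 0 ≤ Real.log (1 + -α) - (-α - 2 * (-α) ^ 2) :=
    sub_nonneg.2 (sub_two_mul_sq_le_log_one_add (by linarith))
  have hsplit : ((1 + α ^ 2) • 1 + (2 * α) • c) * P - Real.exp a •
        ((1 - a - (m + 4 * α ^ 2)) • 1 + (2 * α) • (c + s)) =
      (1 / 2 : ℝ) • ((1 + c) * ((1 + α) ^ 2 • P - Real.exp a • T (a - 2 * Real.log (1 + α)))) +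
      (1 / 2 : ℝ) • ((1 - c) * ((1 + -α) ^ 2 • P - Real.exp a • T (a - 2 * Real.log (1 + -α)))) +
      Real.exp a • ((Real.log (1 + α) - (α - 2 * α ^ 2)) • (1 + c) +
        (Real.log (1 + -α) - (-α - 2 * (-α) ^ 2)) • (1 - c)) := by
    simp only [T]
    algebra
  rw [hsplit]
  refine S.add_mem (S.add_mem ?_ ?_) ?_
  · exact hS _ one_half_pos.le _ (S.mul_mem hc_add (hscaled (by linarith)))
  · exact hS _ one_half_pos.le _ (S.mul_mem hc_sub (hscaled (by linarith)))
  · exact hS _ (Real.exp_pos a).le _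
      (S.add_mem (hS _ hlog_add _ hc_add) (hS _ hlog_sub _ hc_sub))

lemma prod_sub_exp_smul_mem (hS : ∀ r : ℝ, 0 ≤ r → ∀ p ∈ S, r • p ∈ S)
    (hc_add : ∀ i ∈ L, 1 + c i ∈ S) (hc_sub : ∀ i ∈ L, 1 - c i ∈ S)
    (hα : |α| ≤ 1 / 2) (a : ℝ) :
    ∏ i ∈ L, ((1 + α ^ 2) • 1 + (2 * α) • c i) - Real.exp a •
      ((1 - a - 4 * α ^ 2 * L.card) • 1 + (2 * α) • ∑ i ∈ L, c i) ∈ S := by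
  classical
  induction L using Finset.induction_on generalizing a with
  | empty =>
    have htangent : Real.exp a * (1 - a) ≤ 1 := by
      simpa [← Real.exp_add] using
        mul_le_mul_of_nonneg_left (Real.one_sub_le_exp_neg a) (Real.exp_pos a).le
    have hone : 1 - Real.exp a • (1 - a) • (1 : R) = (1 - Real.exp a * (1 - a)) • 1 := by algebra
    simpa [hone] using hS _ (sub_nonneg.2 htangent) 1 S.one_mem
  | insert g L hg ih =>
    replace ih := ih (fun i hi ↦ hc_add i (Finset.mem_insert_of_mem hi))
      (fun i hi ↦ hc_sub i (Finset.mem_insert_of_mem hi))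
    rw [Finset.prod_insert hg, Finset.sum_insert hg, Finset.card_insert_of_notMem hg,
      Nat.cast_succ, mul_add_one]
    exact mul_sub_exp_smul_mem hS (hc_add g (Finset.mem_insert_self g L))
      (hc_sub g (Finset.mem_insert_self g L)) hα ih a

/-- Jensen's inequality for the exponential and the state `φ / φ 1`. -/
lemma exp_mul_le_map_prod (hS : ∀ r : ℝ, 0 ≤ r → ∀ p ∈ S, r • p ∈ S)
    (hc_add : ∀ i ∈ L, 1 + c i ∈ S) (hc_sub : ∀ i ∈ L, 1 - c i ∈ S) (hα : |α| ≤ 1 / 2)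
    {φ : R →ₗ[ℝ] ℝ} (hφ : ∀ p ∈ S, 0 ≤ φ p) (hφ_one : 0 < φ 1) :
    Real.exp (2 * α * (∑ i ∈ L, φ (c i)) / φ 1 - 4 * α ^ 2 * L.card) * φ 1 ≤
      φ (∏ i ∈ L, ((1 + α ^ 2) • 1 + (2 * α) • c i)) := by
  set a := 2 * α * (∑ i ∈ L, φ (c i)) / φ 1 - 4 * α ^ 2 * L.card with ha
  have htangent := hφ _ (prod_sub_exp_smul_mem hS hc_add hc_sub hα a)
  have hvalue : (1 - a - 4 * α ^ 2 * L.card) * φ 1 + 2 * α * ∑ i ∈ L, φ (c i) = φ 1 := by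
    rw [ha]
    field_simp
    ring
  rwa [map_sub, map_smul, map_add, map_smul, map_smul, map_sum, smul_eq_mul, smul_eq_mul,
    smul_eq_mul, hvalue, sub_nonneg] at htangent

end PositiveFunctional

section GroupAlgebra

open AddMonoidAlgebra

variable {G : Type*} [AddCommGroup G]

/-- The involution of the real group algebra induced by `g ↦ -g`: complex conjugation, when
elements of `ℝ[G]` are regarded as functions on the dual group. -/
noncomputable def reflect : ℝ[G] ≃ₐ[ℝ] ℝ[G] := domCongr ℝ ℝ (AddEquiv.neg G)

@[simp]
lemma reflect_single (g : G) (r : ℝ) : reflect (single g r) = single (-g) r := by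
  simp [reflect]

/-- The Hermitian square `u * u⋆`, the analogue of `|u|²` in the real group algebra. -/
noncomputable def hermitianSq : ℝ[G] →* ℝ[G] :=
  MonoidHom.id ℝ[G] * ((reflect : ℝ[G] ≃ₐ[ℝ] ℝ[G]) : ℝ[G] →* ℝ[G])

lemma hermitianSq_apply (u : ℝ[G]) : hermitianSq u = u * reflect u := rfl

@[simp]
lemma hermitianSq_single (g : G) (r : ℝ) : hermitianSq (single g r) = r ^ 2 • 1 := by
  simp [hermitianSq_apply, single_mul_single, one_def, sq]

/-- The sums of Hermitian squares, which play the role of the nonnegative elements of the real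
group algebra. -/
noncomputable def sumHermitianSq (G : Type*) [AddCommGroup G] : Subsemiring ℝ[G] :=
  (MonoidHom.mrange (hermitianSq (G := G))).subsemiringClosure

lemma hermitianSq_mem (u : ℝ[G]) : hermitianSq u ∈ sumHermitianSq G :=
  (Submonoid.subsemiringClosure_mem _).2 (AddSubmonoid.subset_closure ⟨u, rfl⟩)

lemma smul_mem_sumHermitianSq {r : ℝ} (hr : 0 ≤ r) {p : ℝ[G]} (hp : p ∈ sumHermitianSq G) :
    r • p ∈ sumHermitianSq G := by
  have hscalar : hermitianSq (single (0 : G) √r) = r • 1 := by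
    rw [hermitianSq_single, Real.sq_sqrt hr]
  rw [← one_mul p, ← smul_mul_assoc, ← hscalar]
  exact mul_mem (hermitianSq_mem _) hp

/-- The analogue of the Cauchy–Schwarz inequality `|∑ i ∈ I, v i|² ≤ #I * ∑ i ∈ I, |v i|²`. -/
lemma card_smul_sum_hermitianSq_sub_mem {ι : Type*} (I : Finset ι) (v : ι → ℝ[G]) :
    (I.card : ℝ) • ∑ i ∈ I, hermitianSq (v i) - hermitianSq (∑ i ∈ I, v i) ∈
      sumHermitianSq G := by
  have hlagrange : (I.card : ℝ) • ∑ i ∈ I, hermitianSq (v i) - hermitianSq (∑ i ∈ I, v i) =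
      (1 / 2 : ℝ) • ∑ i ∈ I, ∑ j ∈ I, hermitianSq (v i - v j) := by
    simp only [hermitianSq_apply, map_sub, map_sum, sub_mul, mul_sub, Finset.sum_sub_distrib,
      Finset.sum_const, ← Finset.smul_sum, ← Finset.mul_sum, ← Finset.sum_mul,
      ← Nat.cast_smul_eq_nsmul ℝ]
    algebra
  rw [hlagrange]
  exact smul_mem_sumHermitianSq one_half_pos.le
    (sum_mem fun i _ ↦ sum_mem fun j _ ↦ hermitianSq_mem _)

/-- The element `(e_g + e_{-g}) / 2`, the analogue of the cosine. -/
noncomputable def cosine (g : G) : ℝ[G] := (1 / 2 : ℝ) • (single g 1 + single (-g) 1)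

lemma hermitianSq_one_add_single (g : G) (α : ℝ) :
    hermitianSq (1 + single g α) = (1 + α ^ 2) • 1 + (2 * α) • cosine g := by
  have hsq := hermitianSq_single g α
  have hcos : single g α + single (-g) α = (2 * α) • cosine g := by
    simp [cosine, mul_comm]
  rw [hermitianSq_apply, reflect_single] at hsq
  rw [hermitianSq_apply, map_add, map_one, reflect_single, ← hcos, add_smul, ← hsq, one_smul]
  ring

lemma one_add_cosine_mem (g : G) : 1 + cosine g ∈ sumHermitianSq G := by
  have hsq : 1 + cosine g = (1 / 2 : ℝ) • hermitianSq (1 + single g 1) := by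
    rw [hermitianSq_one_add_single]
    algebra
  rw [hsq]
  exact smul_mem_sumHermitianSq one_half_pos.le (hermitianSq_mem _)

lemma one_sub_cosine_mem (g : G) : 1 - cosine g ∈ sumHermitianSq G := by
  have hsq : 1 - cosine g = (1 / 2 : ℝ) • hermitianSq (1 + single g (-1)) := by
    rw [hermitianSq_one_add_single]
    algebra
  rw [hsq]
  exact smul_mem_sumHermitianSq one_half_pos.le (hermitianSq_mem _)

/-- The coefficient at `0`, the analogue of the integral over the dual group. -/
noncomputable def coeffZero : ℝ[G] →ₗ[ℝ] ℝ where
  toFun p := p.coeff 0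
  map_add' _ _ := rfl
  map_smul' _ _ := rfl

lemma coeffZero_apply (p : ℝ[G]) : coeffZero p = p.coeff 0 := rfl

lemma coeffZero_single [DecidableEq G] (g : G) (r : ℝ) :
    coeffZero (single g r) = if g = 0 then r else 0 := by
  rw [coeffZero_apply, coeff_single, Finsupp.single_apply]

lemma coeffZero_reflect (p : ℝ[G]) : coeffZero (reflect p) = coeffZero p := by
  simp [coeffZero_apply, reflect, coeff_domCongr]

lemma coeffZero_sum_single_mul_reflect [DecidableEq G] {ι κ : Type*} (I : Finset ι) (J : Finset κ)
    (x : ι → G) (y : κ → G) (a : ι → ℝ) (b : κ → ℝ) :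
    coeffZero ((∑ i ∈ I, single (x i) (a i)) * reflect (∑ j ∈ J, single (y j) (b j))) =
      ∑ i ∈ I, ∑ j ∈ J, if x i = y j then a i * b j else 0 := by
  simp [Finset.sum_mul_sum, single_mul_single, coeffZero_single, ← sub_eq_add_neg, sub_eq_zero]

lemma coeffZero_hermitianSq_sum_single {ι : Type*} {I : Finset ι} {x : ι → G}
    (hx : Set.InjOn x I) (a : ι → ℝ) :
    coeffZero (hermitianSq (∑ i ∈ I, single (x i) (a i))) = ∑ i ∈ I, a i ^ 2 := by
  classical
  rw [hermitianSq_apply, coeffZero_sum_single_mul_reflect]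
  refine Finset.sum_congr rfl fun i hi ↦ ?_
  rw [Finset.sum_eq_single_of_mem i hi fun j hj hji ↦ if_neg fun h ↦ hji (hx hj hi h.symm),
    if_pos rfl, sq]

lemma coeffZero_nonneg {p : ℝ[G]} (hp : p ∈ sumHermitianSq G) : 0 ≤ coeffZero p := by
  rw [sumHermitianSq, Submonoid.subsemiringClosure_mem] at hp
  induction hp using AddSubmonoid.closure_induction with
  | mem _ h =>
    obtain ⟨u, rfl⟩ := h
    rw [← sum_coeff_single u, Finsupp.sum,
      coeffZero_hermitianSq_sum_single (x := fun g ↦ g) Function.injective_id.injOn]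
    positivity
  | zero => rw [map_zero]
  | add p q _ _ hp hq =>
    rw [map_add]
    exact add_nonneg hp hq

lemma coeffZero_hermitianSq_mul_cosine (u : ℝ[G]) (g : G) :
    coeffZero (hermitianSq u * cosine g) = coeffZero (single g 1 * u * reflect u) := by
  have hsymm : coeffZero (single (-g) 1 * u * reflect u) =
      coeffZero (single g 1 * u * reflect u) := by
    have hinvol : reflect (reflect u) = u := by
      simp [reflect, ← coeff_inj, Finsupp.ext_iff, coeff_domCongr]
    rw [← coeffZero_reflect]
    simp only [map_mul, reflect_single, neg_neg, hinvol, mul_assoc, mul_comm u]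
  have hsplit : hermitianSq u * cosine g = (1 / 2 : ℝ) •
      (single g 1 * u * reflect u + single (-g) 1 * u * reflect u) := by
    rw [hermitianSq_apply, cosine]
    algebra
  rw [hsplit, map_smul, map_add, hsymm, smul_eq_mul]
  ring

lemma coeffZero_hermitianSq_sum_single_mul_cosine [DecidableEq G] (X : Finset G) (f : G → ℝ)
    (g : G) :
    coeffZero (hermitianSq (∑ x ∈ X, single x (f x)) * cosine g) =
      ∑ x ∈ X with g + x ∈ X, f x * f (g + x) := by
  rw [coeffZero_hermitianSq_mul_cosine, Finset.mul_sum]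
  simp_rw [single_mul_single, one_mul]
  rw [coeffZero_sum_single_mul_reflect]
  simp [Finset.sum_filter]

/-- Dissociativity says that `∏ g ∈ L, (1 + α e_g)` expands without collisions. -/
lemma coeffZero_hermitianSq_prod_one_add_single {L : Finset G} (hL : AddDissociated (L : Set G))
    (α : ℝ) :
    coeffZero (hermitianSq (∏ g ∈ L, (1 + single g α))) = (1 + α ^ 2) ^ L.card := by
  classical
  have hexpand : (∏ g ∈ L, (1 + single g α) : ℝ[G]) =
      ∑ t ∈ L.powerset, single (∑ g ∈ t, g) (α ^ t.card) := by
    simp [Finset.prod_one_add, prod_single]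
  have hinj : Set.InjOn (fun t : Finset G ↦ ∑ g ∈ t, g) L.powerset := by
    simpa [AddDissociated, Set.InjOn] using hL
  rw [hexpand, coeffZero_hermitianSq_sum_single hinj, ← Finset.prod_const, Finset.prod_one_add]
  simp [← pow_mul, mul_comm]

lemma coeffZero_hermitianSq_mul_hermitianSq_prod_le {L : Finset G}
    (hL : AddDissociated (L : Set G)) (α : ℝ) (X : Finset G) (f : G → ℝ) :
    coeffZero (hermitianSq (∑ x ∈ X, single x (f x)) *
        hermitianSq (∏ g ∈ L, (1 + single g α))) ≤
      X.card * Real.exp (α ^ 2 * L.card) * ∑ x ∈ X, f x ^ 2 := by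
  have hcs := coeffZero_nonneg (mul_mem
    (card_smul_sum_hermitianSq_sub_mem X fun x ↦ single x (f x))
    (hermitianSq_mem (∏ g ∈ L, (1 + single g α))))
  simp only [hermitianSq_single, ← Finset.sum_smul, sub_mul, map_sub, smul_mul_assoc, one_mul,
    map_smul, coeffZero_hermitianSq_prod_one_add_single hL, smul_eq_mul, sub_nonneg] at hcs
  have hexp : (1 + α ^ 2) ^ L.card ≤ Real.exp (α ^ 2 * L.card) := by
    rw [mul_comm, Real.exp_nat_mul]
    gcongr
    linarith [Real.add_one_le_exp (α ^ 2)]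
  calc _ ≤ X.card * ((∑ x ∈ X, f x ^ 2) * (1 + α ^ 2) ^ L.card) := hcs
    _ ≤ X.card * ((∑ x ∈ X, f x ^ 2) * Real.exp (α ^ 2 * L.card)) := by gcongr
    _ = X.card * Real.exp (α ^ 2 * L.card) * ∑ x ∈ X, f x ^ 2 := by ring

/-- A form of Rudin's inequality, with the dual group eliminated. -/
lemma sum_autocorrelation_le_of_addDissociated [DecidableEq G] {L : Finset G}
    (hL : AddDissociated (L : Set G)) {α : ℝ} (hα : |α| ≤ 1 / 2) (X : Finset G) (f : G → ℝ) :
    2 * α * ∑ g ∈ L, ∑ x ∈ X with g + x ∈ X, f x * f (g + x) ≤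
      (Real.log X.card + 5 * α ^ 2 * L.card) * ∑ x ∈ X, f x ^ 2 := by
  set E := ∑ g ∈ L, ∑ x ∈ X with g + x ∈ X, f x * f (g + x)
  set F := ∑ x ∈ X, f x ^ 2 with hF
  rcases (Finset.sum_nonneg fun x _ ↦ sq_nonneg (f x) : 0 ≤ F).eq_or_lt with hF0 | hFpos
  · have hf : ∀ x ∈ X, f x = 0 := fun x hx ↦ pow_eq_zero_iff two_ne_zero |>.1 <|
      (Finset.sum_eq_zero_iff_of_nonneg fun x _ ↦ sq_nonneg (f x)).1 hF0.symm x hx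
    have hE0 : E = 0 := Finset.sum_eq_zero fun g _ ↦ Finset.sum_eq_zero fun x hx ↦ by
      rw [hf x (Finset.mem_filter.1 hx).1, zero_mul]
    rw [hE0, hF, ← hF0, mul_zero, mul_zero]
  set u : ℝ[G] := ∑ x ∈ X, single x (f x)
  let φ : ℝ[G] →ₗ[ℝ] ℝ := coeffZero ∘ₗ LinearMap.mulLeft ℝ (hermitianSq u)
  have hφ (p : ℝ[G]) : φ p = coeffZero (hermitianSq u * p) := rfl
  have hφ_one : φ 1 = F := by
    rw [hφ, mul_one]
    exact coeffZero_hermitianSq_sum_single Function.injective_id.injOn f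
  have hφ_cos : ∑ g ∈ L, φ (cosine g) = E :=
    Finset.sum_congr rfl fun g _ ↦ coeffZero_hermitianSq_sum_single_mul_cosine X f g
  have hlower := exp_mul_le_map_prod (S := sumHermitianSq G) (L := L) (φ := φ)
    (fun r hr p hp ↦ smul_mem_sumHermitianSq hr hp)
    (fun g _ ↦ one_add_cosine_mem g) (fun g _ ↦ one_sub_cosine_mem g) hα
    (fun p hp ↦ coeffZero_nonneg (mul_mem (hermitianSq_mem u) hp)) (hφ_one ▸ hFpos)
  have hupper := coeffZero_hermitianSq_mul_hermitianSq_prod_le hL α X f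
  simp_rw [← hermitianSq_one_add_single, ← map_prod, hφ_cos, hφ_one] at hlower
  have hexp := le_of_mul_le_mul_right (hlower.trans hupper) hFpos
  have hX : 0 < (X.card : ℝ) := pos_of_mul_pos_left ((Real.exp_pos _).trans_le hexp) (by positivity)
  have hlog := (Real.le_log_iff_exp_le (by positivity)).2 hexp
  rw [Real.log_mul hX.ne' (Real.exp_ne_zero _), Real.log_exp] at hlog
  rw [← div_le_iff₀ hFpos]
  linarith

end GroupAlgebra

section Doubling

variable {G : Type*} [AddCommGroup G] [DecidableEq G] {A L : Finset G} {K r : ℝ}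

/-- The test function for the autocorrelation inequality: `r` on `A` and `1` elsewhere, to be
considered on `A ∪ (A + A)`. -/
def doublingWeight (A : Finset G) (r : ℝ) (x : G) : ℝ := if x ∈ A then r else 1

lemma sum_doublingWeight_sq_le (A : Finset G) (r : ℝ) :
    ∑ x ∈ A ∪ (A + A), doublingWeight A r x ^ 2 ≤ r ^ 2 * A.card + (A + A).card := by
  have hA : ∑ x ∈ A, doublingWeight A r x ^ 2 = r ^ 2 * A.card := by
    rw [Finset.sum_congr rfl fun x hx ↦ by rw [doublingWeight, if_pos hx], Finset.sum_const,
      nsmul_eq_mul, mul_comm]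
  have hcompl : ∑ x ∈ (A + A) \ A, doublingWeight A r x ^ 2 = ((A + A) \ A).card := by
    rw [Finset.sum_congr rfl fun x hx ↦ by
      rw [doublingWeight, if_neg (Finset.mem_sdiff.1 hx).2, one_pow], Finset.sum_const,
      nsmul_eq_mul, mul_one]
  rw [← Finset.union_sdiff_self_eq_union, Finset.sum_union Finset.disjoint_sdiff, hA, hcompl]
  gcongr
  exact Finset.sdiff_subset

lemma mul_card_le_sum_doublingWeight_mul (hr : 1 ≤ r) {g : G} (hg : g ∈ A) :
    r * A.card ≤ ∑ x ∈ A ∪ (A + A) with g + x ∈ A ∪ (A + A),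
      doublingWeight A r x * doublingWeight A r (g + x) := by
  have hweight (x : G) : 1 ≤ doublingWeight A r x := by
    rw [doublingWeight]
    split_ifs
    exacts [hr, le_rfl]
  have hsubset : A ⊆ {x ∈ A ∪ (A + A) | g + x ∈ A ∪ (A + A)} := fun x hx ↦ Finset.mem_filter.2
    ⟨Finset.mem_union_left _ hx, Finset.mem_union_right _ (Finset.add_mem_add hg hx)⟩
  calc r * A.card = ∑ x ∈ A, r * 1 := by rw [Finset.sum_const, nsmul_eq_mul, mul_one, mul_comm]
    _ ≤ ∑ x ∈ A, doublingWeight A r x * doublingWeight A r (g + x) := by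
      refine Finset.sum_le_sum fun x hx ↦ ?_
      have hx_eq : doublingWeight A r x = r := if_pos hx
      rw [hx_eq]
      exact mul_le_mul_of_nonneg_left (hweight _) (by linarith)
    _ ≤ _ := Finset.sum_le_sum_of_subset_of_nonneg hsubset fun x _ _ ↦
      mul_nonneg (zero_le_one.trans (hweight x)) (zero_le_one.trans (hweight _))

lemma log_card_union_add_self_le (hA : 2 ≤ A.card) :
    Real.log (A ∪ (A + A)).card ≤ 3 * Real.log A.card := by
  have hcard : (A ∪ (A + A)).card ≤ A.card ^ 3 := by
    calc (A ∪ (A + A)).card ≤ A.card + (A + A).card := Finset.card_union_le _ _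
      _ ≤ A.card + A.card * A.card := by gcongr; exact Finset.card_add_le
      _ ≤ A.card ^ 3 := by nlinarith
  have hpos : 0 < (A ∪ (A + A)).card :=
    Finset.card_pos.2 ((Finset.card_pos.1 (by omega)).mono Finset.subset_union_left)
  calc Real.log (A ∪ (A + A)).card ≤ Real.log ((A.card : ℝ) ^ 3) :=
        Real.log_le_log (by exact_mod_cast hpos) (by exact_mod_cast hcard)
    _ = 3 * Real.log A.card := by rw [Real.log_pow, Nat.cast_ofNat]

lemma one_le_of_card_add_self_le (hA : A.Nonempty) (hAA : ((A + A).card : ℝ) ≤ K * A.card) :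
    1 ≤ K := by
  have hcard : (A.card : ℝ) ≤ (A + A).card := by
    exact_mod_cast Finset.card_le_card_add_left hA
  have hpos : (0 : ℝ) < A.card := by exact_mod_cast hA.card_pos
  exact le_of_mul_le_mul_right (by linarith) hpos

lemma card_le_of_addDissociated (hA : 2 ≤ A.card) (hAA : ((A + A).card : ℝ) ≤ K * A.card)
    (hLA : L ⊆ A) (hL : AddDissociated (L : Set G)) :
    (L.card : ℝ) ≤ 60 * K * Real.log A.card := by
  have hK : 1 ≤ K := one_le_of_card_add_self_le (Finset.card_pos.1 (by omega)) hAA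
  obtain ⟨r, hr, rfl⟩ : ∃ r : ℝ, 1 ≤ r ∧ K = r ^ 2 :=
    ⟨√K, Real.one_le_sqrt.2 hK, (Real.sq_sqrt (by linarith)).symm⟩
  have hA_pos : (0 : ℝ) < A.card := by exact_mod_cast (by omega : 0 < A.card)
  have hα : |1 / (10 * r)| ≤ 1 / 2 := by
    rw [abs_of_pos (by positivity)]
    gcongr
    linarith
  have henergy : ∑ x ∈ A ∪ (A + A), doublingWeight A r x ^ 2 ≤ 2 * r ^ 2 * A.card := by
    linarith [sum_doublingWeight_sq_le A r]
  have hcorr : L.card * (r * A.card) ≤ ∑ g ∈ L, ∑ x ∈ A ∪ (A + A) with g + x ∈ A ∪ (A + A),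
      doublingWeight A r x * doublingWeight A r (g + x) := by
    rw [← nsmul_eq_mul]
    exact Finset.card_nsmul_le_sum _ _ _ fun g hg ↦
      mul_card_le_sum_doublingWeight_mul hr (hLA hg)
  have hmain : (1 / 5 * L.card) * A.card ≤
      (6 * r ^ 2 * Real.log A.card + 1 / 10 * L.card) * A.card := by
    calc (1 / 5 * L.card) * A.card = 2 * (1 / (10 * r)) * (L.card * (r * A.card)) := by
          field_simp
          ring
      _ ≤ 2 * (1 / (10 * r)) * ∑ g ∈ L, ∑ x ∈ A ∪ (A + A) with g + x ∈ A ∪ (A + A),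
          doublingWeight A r x * doublingWeight A r (g + x) := by gcongr
      _ ≤ (Real.log (A ∪ (A + A)).card + 5 * (1 / (10 * r)) ^ 2 * L.card) *
          ∑ x ∈ A ∪ (A + A), doublingWeight A r x ^ 2 :=
        sum_autocorrelation_le_of_addDissociated hL hα _ _
      _ ≤ (3 * Real.log A.card + 5 * (1 / (10 * r)) ^ 2 * L.card) * (2 * r ^ 2 * A.card) := by
        gcongr
        exact log_card_union_add_self_le hA
      _ = (6 * r ^ 2 * Real.log A.card + 1 / 10 * L.card) * A.card := by
        field_simp
        ring
  linarith [le_of_mul_le_mul_right hmain hA_pos]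

theorem shkredov_span_theorem_general (hA : 2 ≤ A.card)
    (hAA : ((A + A).card : ℝ) ≤ K * A.card) :
    ∃ L ⊆ A, AddDissociated (L : Set G) ∧ (A : Set G) ⊆ Span L ∧
      (L.card : ℝ) ≤ 60 * K * Real.log A.card := by
  obtain ⟨L, hLA, hL, hspan⟩ := exists_addDissociated_subset_span A
  exact ⟨L, hLA, hL, hspan, card_le_of_addDissociated hA hAA hLA hL⟩

end Doubling

theorem shkredov_span_theorem :
    ∃ C : ℝ, 0 < C ∧
      ∀ (G : Type) [AddCommGroup G] [DecidableEq G] (A : Finset G) (K : ℝ),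
        2 ≤ A.card → 1 ≤ K → ((A + A).card : ℝ) ≤ K * A.card →
        ∃ L : Finset G,
          (↑A : Set G) ⊆ Span L ∧ (L.card : ℝ) ≤ C * K * Real.log A.card := by
  refine ⟨60, by norm_num, fun G _ _ A K hA _ hAA ↦ ?_⟩
  obtain ⟨L, -, -, hspan, hcard⟩ := shkredov_span_theorem_general hA hAA
  exact ⟨L, hspan, hcard⟩
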